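/- Let W = W(A, α, u) be a generalized Weyl algebra with u central and regular in A such that, for some fixed positive integer m: (1) Au + Aα^i(u) = A for all positive integers i ≠ m; and (2) M := Au + Aα^m(u) is a maximal two-sided ideal of A. Then the graded ideal J(M) is a maximal two-sided ideal of W containing both X^m and Y^m, and J(M) is the unique prime two-sided ideal P of W for which there exists a positive integer r with X^r ∈ P and Y^r ∈ P. Moreover, if A is α-simple and no positive power of α is an inner automorphism of A, then J(M) is the unique nonzero prime two-sided ideal of W. -/

import Mathlib

/-!
The degree-`d` component of `J(M)` consists of the `a ∈ A` such that `α^ℓ(a) ∈ M` whenever `ℓ` and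
`ℓ + d` both lie in `[0, m)`. This is what one expects if `W / J(M)` is the ring of `m × m` matrices
over `A / M`, with the homogeneous elements of degree `d` occupying the positions `(ℓ, ℓ + d)`; since
`u` and `α^m(u)` lie in `M`, it does define an ideal.

Maximality is the usual proof that matrices over a simple ring form a simple ring. The translates
`α^k(u)` with `0 < |k| < m` can be cancelled modulo `M`, so products of translates of `u` are central
elements of `A` separating the `m` positions (`exists_separating`). An ideal that contains `J(M)`
strictly thus contains a homogeneous element that is nonzero at a single position
(`exists_homogeneous`); it can be pushed to degree `0` (`exists_degree_zero`) and moved to any other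
position by conjugation with `X` or `Y` (`exists_all_positions`), and `M` being maximal, one obtains
`1` (`isMaximal_gradedIdeal`).

Let now `P` be a proper ideal containing powers of `X` and of `Y`. If `Y^r ∈ P` with `r ≥ 1`, then
multiplication by `X` on both sides gives `(Au + Aα^r(u)) Y^{r-1} ⊆ P`, so the least such exponent
must be `m` (`Y_pow_mem`), and likewise for `X`. The same argument, degree by degree from `±m` down
to `0`, gives `J(M) ⊆ P` (`gradedIdeal_le`), and then `P = J(M)` by maximality. Primeness is used
only through properness.

Finally, let `A` be `α`-simple with no positive power of `α` inner, and `P` a nonzero ideal. Then `P`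
generates a nonzero ideal of the skew Laurent ring `A[Y^{±1}; α]` (`exists_inLaurent`). By
`α`-simplicity, a nonzero element of this ideal with the fewest terms can be chosen with a coefficient
equal to `1`; its commutators with `Y`, and twisted commutators with `A`, are shorter, hence vanish,
and any other nonzero coefficient would be a unit making a nonzero power of `α` inner
(`eq_zero_of_twisted_central`). So the element is a power of `Y`, and `P` contains a power of `Y`
(`exists_Y_pow_mem`). Exchanging `X` and `Y` (`IsGWA.swap`) gives a power of `X` in `P`, and the
previous paragraph applies.
-/

noncomputable section

/-- The "monomial" of degree `i` in a generalized Weyl algebra: `Y^i` for `i ≥ 0`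
and `X^(-i)` for `i < 0`. -/
def gwaMon {W : Type*} [Monoid W] (X Y : W) : ℤ → W :=
  fun i => if 0 ≤ i then Y ^ i.toNat else X ^ (-i).toNat

/-- `W` is a generalized Weyl algebra `W(A, α, u)` with respect to the embedding
`ι : A →+* W` and the elements `X, Y`: the defining relations hold and `W` is free as
a left `A`-module with basis `{X^i : i ≥ 1} ∪ {1} ∪ {Y^i : i ≥ 1}`. -/
structure IsGWA {A W : Type*} [Ring A] [Ring W]
    (α : A ≃+* A) (u : A) (ι : A →+* W) (X Y : W) : Prop where
  central : ∀ a : A, u * a = a * u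
  YX : Y * X = ι (α u)
  XY : X * Y = ι u
  Ya : ∀ a : A, Y * ι a = ι (α a) * Y
  Xa : ∀ a : A, X * ι a = ι (α.symm a) * X
  free : Function.Bijective
    (fun f : ℤ →₀ A => f.sum fun i a => ι a * gwaMon X Y i)

/-- `R` is the conformal ambiskew polynomial ring `R(A, α, u − α(u), 1)` with respect to
the embedding `ι : A →ₐ[K] R` and the elements `x, y`: the defining relations hold and
`R` is free as a left `A`-module with basis `{yⁱxʲ : i, j ≥ 0}`. -/
structure IsAmbiskew {K A R : Type*} [Field K] [Ring A] [Algebra K A] [Ring R] [Algebra K R]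
    (α : A ≃ₐ[K] A) (u : A) (ι : A →ₐ[K] R) (x y : R) : Prop where
  ucentral : ∀ a : A, u * a = a * u
  ya : ∀ a : A, y * ι a = ι (α a) * y
  xa : ∀ a : A, x * ι a = ι (α.symm a) * x
  xy : x * y = y * x + ι (u - α u)
  free : Function.Bijective
    (fun f : ℕ × ℕ →₀ A => f.sum fun p a => ι a * (y ^ p.1 * x ^ p.2))

/-- `S` is the skew Laurent polynomial ring `A[y^{±1}; α]` with respect to the embedding
`ι : A →ₐ[K] S` and the invertible element `Y`: `Y·a = α(a)·Y` and `S` is free as a left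
`A`-module with basis `{Yⁱ : i ∈ ℤ}`. -/
structure IsSkewLaurent {K A S : Type*} [Field K] [Ring A] [Algebra K A] [Ring S] [Algebra K S]
    (α : A ≃ₐ[K] A) (ι : A →ₐ[K] S) (Y : Sˣ) : Prop where
  comm : ∀ a : A, (Y : S) * ι a = ι (α a) * (Y : S)
  free : Function.Bijective
    (fun f : ℤ →₀ A => f.sum fun i a => ι a * ((Y ^ i : Sˣ) : S))

/-- `φ : R →+* C` exhibits `C` as the localization of `R` at the multiplicative set `Z`
of central elements: each element of `Z` is central and becomes a unit, every element of
`C` is a fraction, and the kernel of `φ` is the set of elements annihilated by `Z`. -/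
structure IsCentralLocalization {R C : Type*} [Ring R] [Ring C] (Z : Set R) (φ : R →+* C) : Prop where
  central : ∀ s ∈ Z, ∀ r : R, s * r = r * s
  isUnit : ∀ s ∈ Z, IsUnit (φ s)
  surj : ∀ c : C, ∃ r : R, ∃ s ∈ Z, c * φ s = φ r
  ker : ∀ r : R, φ r = 0 ↔ ∃ s ∈ Z, r * s = 0

/-- A two-sided ideal `P` is prime: it is proper and whenever the product of two two-sided
ideals lies in `P`, one of them lies in `P`. -/
def IsPrimeTwoSided {C : Type*} [Ring C] (P : TwoSidedIdeal C) : Prop :=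
  P ≠ ⊤ ∧ ∀ I J : TwoSidedIdeal C, (∀ a ∈ I, ∀ b ∈ J, a * b ∈ P) → I ≤ P ∨ J ≤ P

/-- A two-sided ideal `M` is maximal: proper and maximal among proper two-sided ideals. -/
def IsMaximalTwoSided {C : Type*} [Ring C] (M : TwoSidedIdeal C) : Prop :=
  M ≠ ⊤ ∧ ∀ T : TwoSidedIdeal C, M < T → T = ⊤

/-- Evaluation of a (commutative) multivariate polynomial over `K` at a family of
(pairwise commuting, central) elements of a possibly noncommutative `K`-algebra. -/
def mvEval {K A : Type*} [CommSemiring K] [Ring A] [Algebra K A] {n : ℕ}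
    (v : Fin n → A) (p : MvPolynomial (Fin n) K) : A :=
  p.support.sum fun d => algebraMap K A (MvPolynomial.coeff d p) *
    ((List.finRange n).map fun i => v i ^ d i).prod

/-- The components of the graded ideal `J(I)` of a generalized Weyl algebra:
`I_i = I_{-i} = A` for `i ≥ m`, `I_i = ∩_{ℓ=0}^{m−1−i} α^{−ℓ}(I)` for `0 ≤ i ≤ m−1`, and
`I_{−i} = ∩_{ℓ=i}^{m−1} α^{−ℓ}(I)` for `0 ≤ i ≤ m−1`. -/
def Jcomp {A : Type*} [Ring A] (α : A ≃+* A) (I : Set A) (m : ℕ) : ℤ → Set A :=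
  fun d => if m ≤ d.natAbs then Set.univ
    else if 0 ≤ d then ⋂ ℓ ∈ Finset.range (m - d.natAbs), (⇑α.symm)^[ℓ] '' I
    else ⋂ ℓ ∈ Finset.Icc d.natAbs (m - 1), (⇑α.symm)^[ℓ] '' I

/-- The subset of a generalized Weyl algebra consisting of all elements whose (unique)
graded components of each degree `d` have coefficients in the prescribed set `comp d`. -/
def gwaGradedSet {A W : Type*} [Ring A] [Ring W] (ι : A →+* W) (X Y : W)
    (comp : ℤ → Set A) : Set W :=
  {w | ∃ f : ℤ →₀ A, (∀ d, f d ∈ comp d) ∧ w = f.sum fun d a => ι a * gwaMon X Y d}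

/-- The set `Au + Aα^m(u)` in `A`. -/
def genSet2 {A : Type*} [Ring A] (x y : A) : Set A :=
  {a : A | ∃ b c : A, a = b * x + c * y}

/-- The product of two sets in a ring, closed under finite sums: for two-sided ideals
this is the usual ideal product. -/
def setMulSum {A : Type*} [Ring A] (S T : Set A) : Set A :=
  {x | ∃ (n : ℕ) (f g : Fin n → A), (∀ i, f i ∈ S ∧ g i ∈ T) ∧ x = ∑ i, f i * g i}

/-- The (right-nested) product of a list of sets in a ring; the empty product is `A`. -/
def listProdSet {A : Type*} [Ring A] (l : List (Set A)) : Set A :=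
  l.foldr setMulSum Set.univ

/-- The element `d_i = α(u)·α²(u)⋯αⁱ(u)`. -/
def dElt {A : Type*} [Ring A] (α : A ≃+* A) (u : A) (i : ℕ) : A :=
  ((List.range i).map fun s => (⇑α)^[s + 1] u).prod

/-- The element `e_i = α^{−i}(d_i) = u·α^{−1}(u)⋯α^{1−i}(u)`. -/
def eElt {A : Type*} [Ring A] (α : A ≃+* A) (u : A) (i : ℕ) : A :=
  (⇑α.symm)^[i] (dElt α u i)

/-- Product of two two-sided ideals. -/
def tsiMul {R : Type*} [Ring R] (I J : TwoSidedIdeal R) : TwoSidedIdeal R :=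
  TwoSidedIdeal.span {x | ∃ a ∈ I, ∃ b ∈ J, x = a * b}

/-- The (right-nested) product of a list of two-sided ideals; the empty product is `R`. -/
def tsiListProd {R : Type*} [Ring R] (l : List (TwoSidedIdeal R)) : TwoSidedIdeal R :=
  l.foldr tsiMul ⊤

/-- A subset of a ring is a right ideal. -/
def IsRightIdealSet {Q : Type*} [Ring Q] (S : Set Q) : Prop :=
  (0 : Q) ∈ S ∧ (∀ a ∈ S, ∀ b ∈ S, a + b ∈ S) ∧ (∀ a ∈ S, -a ∈ S) ∧
    (∀ a ∈ S, ∀ q : Q, a * q ∈ S)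

/-- A right ideal is uniform: it is nonzero and any two nonzero elements generate right
ideals with nonzero intersection (equivalently, any two nonzero submodules intersect
nontrivially). -/
def IsUniformRightIdealSet {Q : Type*} [Ring Q] (S : Set Q) : Prop :=
  (∃ a ∈ S, a ≠ 0) ∧ ∀ a ∈ S, a ≠ 0 → ∀ b ∈ S, b ≠ 0 →
    ∃ q₁ q₂ : Q, a * q₁ = b * q₂ ∧ a * q₁ ≠ 0

/-! ### Automorphism powers and graded multiplication -/

section AutPow

variable {A : Type*} [Ring A] (α : A ≃+* A)

lemma aut_zpow_add (i j : ℤ) (a : A) : (α ^ (i + j)) a = (α ^ i) ((α ^ j) a) := by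
  rw [zpow_add, RingAut.mul_apply]

lemma aut_zpow_one_add (i : ℤ) (a : A) : (α ^ (1 + i)) a = α ((α ^ i) a) := by
  rw [aut_zpow_add, zpow_one]

lemma aut_zpow_add_one (i : ℤ) (a : A) : (α ^ (i + 1)) a = (α ^ i) (α a) := by
  rw [aut_zpow_add, zpow_one]

lemma aut_symm_eq (a : A) : α.symm a = (α ^ (-1 : ℤ)) a := by
  rw [zpow_neg_one, RingAut.inv_apply]

lemma aut_zpow_natCast (n : ℕ) (a : A) : (α ^ (n : ℤ)) a = α^[n] a := by
  rw [zpow_natCast, RingAut.coe_pow]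

lemma aut_iterate_symm (n : ℕ) (a : A) : α.symm^[n] a = (α ^ (-n : ℤ)) a := by
  rw [zpow_neg, ← inv_zpow, zpow_natCast, RingAut.coe_pow]
  rfl

lemma aut_zpow_symm (i : ℤ) (a : A) : (α.symm ^ i) a = (α ^ (-i)) a := by
  rw [zpow_neg, ← inv_zpow]
  rfl

lemma aut_zpow_neg_apply (i : ℤ) (a : A) : (α ^ (-i)) ((α ^ i) a) = a := by
  rw [← aut_zpow_add, neg_add_cancel, zpow_zero]; rfl

lemma aut_zpow_apply_neg (i : ℤ) (a : A) : (α ^ i) ((α ^ (-i)) a) = a := by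
  rw [← aut_zpow_add, add_neg_cancel, zpow_zero]; rfl

lemma aut_zpow_central {u : A} (hu : ∀ a : A, u * a = a * u) (i : ℤ) (a : A) :
    (α ^ i) u * a = a * (α ^ i) u := by
  have := congrArg (α ^ i) (hu ((α ^ (-i)) a))
  simpa [map_mul, aut_zpow_apply_neg] using this

end AutPow

section GWABasic

variable {A W : Type*} [Ring A] [Ring W] {α : A ≃+* A} {u : A} {ι : A →+* W} {X Y : W}

lemma gwaMon_of_nonneg (X Y : W) {d : ℤ} (hd : 0 ≤ d) : gwaMon X Y d = Y ^ d.toNat := by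
  simp [gwaMon, hd]

lemma gwaMon_of_nonpos (X Y : W) {d : ℤ} (hd : d ≤ 0) : gwaMon X Y d = X ^ (-d).toNat := by
  rcases hd.lt_or_eq with h | rfl
  · simp [gwaMon, h]
  · simp [gwaMon]

lemma gwaMon_zero (X Y : W) : gwaMon X Y 0 = 1 := by simp [gwaMon]

lemma gwaMon_natCast (X Y : W) (n : ℕ) : gwaMon X Y n = Y ^ n := by simp [gwaMon]

lemma gwaMon_neg_natCast (X Y : W) (n : ℕ) : gwaMon X Y (-n) = X ^ n := by
  rw [gwaMon_of_nonpos _ _ (by omega)]; simp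

lemma gwaMon_neg (X Y : W) (d : ℤ) : gwaMon X Y (-d) = gwaMon Y X d := by
  rcases le_total 0 d with h | h
  · rw [gwaMon_of_nonpos _ _ (by omega), gwaMon_of_nonneg _ _ h, neg_neg]
  · rw [gwaMon_of_nonneg _ _ (by omega), gwaMon_of_nonpos _ _ h]

lemma gwaMon_add_of_nonneg (X Y : W) {i j : ℤ} (hi : 0 ≤ i) (hj : 0 ≤ j) :
    gwaMon X Y i * gwaMon X Y j = gwaMon X Y (i + j) := by
  rw [gwaMon_of_nonneg _ _ hi, gwaMon_of_nonneg _ _ hj, gwaMon_of_nonneg _ _ (add_nonneg hi hj),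
    Int.toNat_add hi hj, pow_add]

lemma gwaMon_add_of_nonpos (X Y : W) {i j : ℤ} (hi : i ≤ 0) (hj : j ≤ 0) :
    gwaMon X Y i * gwaMon X Y j = gwaMon X Y (i + j) := by
  have h := gwaMon_add_of_nonneg Y X (neg_nonneg.2 hi) (neg_nonneg.2 hj)
  rwa [← neg_add, gwaMon_neg, gwaMon_neg, gwaMon_neg] at h

lemma gwaMon_one (X Y : W) : gwaMon X Y 1 = Y := by simp [gwaMon]

lemma gwaMon_neg_one (X Y : W) : gwaMon X Y (-1) = X := by simp [gwaMon]

/-- Exchanging `X` and `Y` turns `W(A, α, u)` into `W(A, α⁻¹, α(u))`. -/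
lemma IsGWA.swap (hW : IsGWA α u ι X Y) : IsGWA α.symm (α u) ι Y X where
  central a := by
    have := aut_zpow_central α hW.central 1 a
    simpa using this
  YX := by simpa using hW.XY
  XY := hW.YX
  Ya := hW.Xa
  Xa := by simpa using hW.Ya
  free := by
    have h := hW.free.comp (Finsupp.domCongr (M := A) (Equiv.neg ℤ)).bijective
    convert h using 1
    funext f
    simp only [Function.comp, Finsupp.domCongr_apply]
    rw [Finsupp.sum_equivMapDomain]
    simp [gwaMon_neg]

lemma IsGWA.Y_pow (hW : IsGWA α u ι X Y) (n : ℕ) (a : A) :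
    Y ^ n * ι a = ι ((α ^ (n : ℤ)) a) * Y ^ n := by
  induction n generalizing a with
  | zero => simp
  | succ n ih =>
    rw [pow_succ, mul_assoc, hW.Ya, ← mul_assoc, ih, mul_assoc, Nat.cast_succ, aut_zpow_add_one]

lemma IsGWA.mon_mul (hW : IsGWA α u ι X Y) (d : ℤ) (a : A) :
    gwaMon X Y d * ι a = ι ((α ^ d) a) * gwaMon X Y d := by
  obtain ⟨n, rfl | rfl⟩ := d.eq_nat_or_neg
  · rw [gwaMon_natCast, hW.Y_pow]
  · rw [gwaMon_neg_natCast, hW.swap.Y_pow, aut_zpow_symm]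

lemma Y_mul_gwaMon (X Y : W) {d : ℤ} (hd : 0 ≤ d) :
    Y * gwaMon X Y d = gwaMon X Y (1 + d) := by
  rw [← gwaMon_add_of_nonneg _ _ zero_le_one hd, gwaMon_one]

lemma gwaMon_mul_Y (X Y : W) {d : ℤ} (hd : 0 ≤ d) :
    gwaMon X Y d * Y = gwaMon X Y (d + 1) := by
  rw [← gwaMon_add_of_nonneg _ _ hd zero_le_one, gwaMon_one]

lemma X_mul_gwaMon (X Y : W) {d : ℤ} (hd : d ≤ 0) :
    X * gwaMon X Y d = gwaMon X Y (-1 + d) := by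
  rw [← gwaMon_add_of_nonpos _ _ (by omega) hd, gwaMon_neg_one]

lemma gwaMon_mul_X (X Y : W) {d : ℤ} (hd : d ≤ 0) :
    gwaMon X Y d * X = gwaMon X Y (d - 1) := by
  rw [sub_eq_add_neg, ← gwaMon_add_of_nonpos _ _ hd (by omega), gwaMon_neg_one]

lemma IsGWA.Y_mon_of_neg (hW : IsGWA α u ι X Y) {d : ℤ} (hd : d < 0) :
    Y * gwaMon X Y d = ι (α u) * gwaMon X Y (1 + d) := by
  rw [← hW.YX, mul_assoc, X_mul_gwaMon _ _ (by omega)]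
  congr 2; omega

lemma IsGWA.X_mon_of_pos (hW : IsGWA α u ι X Y) {d : ℤ} (hd : 0 < d) :
    X * gwaMon X Y d = ι u * gwaMon X Y (-1 + d) := by
  rw [← hW.XY, mul_assoc, Y_mul_gwaMon _ _ (by omega)]
  congr 2; omega

lemma IsGWA.mon_Y_of_neg (hW : IsGWA α u ι X Y) {d : ℤ} (hd : d < 0) :
    gwaMon X Y d * Y = ι ((α ^ (d + 1)) u) * gwaMon X Y (d + 1) := by
  rw [← hW.mon_mul, ← hW.XY, ← mul_assoc, gwaMon_mul_X _ _ (by omega)]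
  congr 2; omega

lemma IsGWA.mon_X_of_pos (hW : IsGWA α u ι X Y) {d : ℤ} (hd : 0 < d) :
    gwaMon X Y d * X = ι ((α ^ d) u) * gwaMon X Y (d - 1) := by
  have h : (α ^ d) u = (α ^ (d - 1)) (α u) := by rw [← aut_zpow_add_one]; congr 2; omega
  rw [h, ← hW.mon_mul, ← hW.YX, ← mul_assoc, gwaMon_mul_Y _ _ (by omega)]
  congr 2; omega

/-- The element `∑ d, f d · mon d` of `W` with coefficient family `f`, additively in `f`. -/
def gwaSum (ι : A →+* W) (X Y : W) : (ℤ →₀ A) →+ W :=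
  Finsupp.liftAddHom fun d => (AddMonoidHom.mulRight (gwaMon X Y d)).comp (ι : A →+ W)

lemma gwaSum_apply (ι : A →+* W) (X Y : W) (f : ℤ →₀ A) :
    gwaSum ι X Y f = f.sum fun d a => ι a * gwaMon X Y d := rfl

lemma gwaSum_single (ι : A →+* W) (X Y : W) (d : ℤ) (a : A) :
    gwaSum ι X Y (Finsupp.single d a) = ι a * gwaMon X Y d := by
  simp [gwaSum]

lemma IsGWA.bijective (hW : IsGWA α u ι X Y) : Function.Bijective (gwaSum ι X Y) := by
  convert hW.free using 1
  funext f
  exact gwaSum_apply ι X Y f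

/-- `W` is generated as a ring by `A`, `X` and `Y`. -/
lemma IsGWA.induction (hW : IsGWA α u ι X Y) {p : W → Prop} (hι : ∀ a, p (ι a)) (hX : p X)
    (hY : p Y) (hadd : ∀ v w, p v → p w → p (v + w)) (hmul : ∀ v w, p v → p w → p (v * w))
    (w : W) : p w := by
  have hpow : ∀ v, p v → ∀ n : ℕ, p (v ^ n) := fun v hv n => by
    induction n with
    | zero => simpa using hι 1
    | succ n ih => rw [pow_succ]; exact hmul _ _ ih hv
  obtain ⟨f, rfl⟩ := hW.bijective.2 w
  induction f using Finsupp.induction_linear with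
  | zero => simpa using hι 0
  | add f g hf hg => rw [map_add]; exact hadd _ _ hf hg
  | single d a =>
    rw [gwaSum_single]
    refine hmul _ _ (hι a) ?_
    unfold gwaMon
    split_ifs
    · exact hpow _ hY _
    · exact hpow _ hX _

end GWABasic

/-! ### The graded ideal `J(M)` -/

section JIdeal

variable {A W : Type*} [Ring A] [Ring W] {α : A ≃+* A} {u : A} {ι : A →+* W} {X Y : W}

/-- The degree-`d` component of `J(M)`, indexed uniformly in the sign of `d`: it consists of the
`a` with `α^ℓ(a) ∈ M` whenever both `ℓ` and `ℓ + d` lie in `[0, m)`. Thinking of `W / J(M)` as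
`m × m` matrices over `A / M`, the element `a` times the monomial of degree `d` has its
`(ℓ, ℓ + d)` entry equal to `α^ℓ(a)` up to a unit. -/
def JIdeal (α : A ≃+* A) (M : TwoSidedIdeal A) (m : ℕ) (d : ℤ) : TwoSidedIdeal A :=
  .mk' {a | ∀ ℓ : ℤ, 0 ≤ ℓ → ℓ < m → 0 ≤ ℓ + d → ℓ + d < m → (α ^ ℓ) a ∈ M}
    (fun ℓ _ _ _ _ => by rw [map_zero]; exact M.zero_mem)
    (fun hx hy ℓ h1 h2 h3 h4 => by
      rw [map_add]; exact M.add_mem (hx ℓ h1 h2 h3 h4) (hy ℓ h1 h2 h3 h4))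
    (fun hx ℓ h1 h2 h3 h4 => by rw [map_neg]; exact M.neg_mem (hx ℓ h1 h2 h3 h4))
    (fun hy ℓ h1 h2 h3 h4 => by
      rw [map_mul]; exact M.mul_mem_left _ _ (hy ℓ h1 h2 h3 h4))
    (fun hx ℓ h1 h2 h3 h4 => by
      rw [map_mul]; exact M.mul_mem_right _ _ (hx ℓ h1 h2 h3 h4))

lemma mem_JIdeal {M : TwoSidedIdeal A} {m : ℕ} {d : ℤ} {a : A} :
    a ∈ JIdeal α M m d ↔
      ∀ ℓ : ℤ, 0 ≤ ℓ → ℓ < m → 0 ≤ ℓ + d → ℓ + d < m → (α ^ ℓ) a ∈ M := by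
  rw [JIdeal, TwoSidedIdeal.mem_mk']; rfl

lemma aut_mem_image_symm_iterate (M : TwoSidedIdeal A) (n : ℕ) (a : A) :
    a ∈ α.symm^[n] '' (M : Set A) ↔ (α ^ (n : ℤ)) a ∈ M := by
  constructor
  · rintro ⟨b, hb, rfl⟩
    rwa [aut_iterate_symm, aut_zpow_apply_neg]
  · intro h
    exact ⟨_, h, by rw [aut_iterate_symm, aut_zpow_neg_apply]⟩

lemma mem_Jcomp_iff (M : TwoSidedIdeal A) (m : ℕ) (d : ℤ) (a : A) :
    a ∈ Jcomp α (M : Set A) m d ↔ a ∈ JIdeal α M m d := by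
  rw [mem_JIdeal]
  unfold Jcomp
  split_ifs with h1 h2
  · exact iff_of_true trivial fun ℓ _ _ _ _ => by omega
  · simp only [Set.mem_iInter, aut_mem_image_symm_iterate, Finset.mem_range]
    constructor
    · intro h ℓ _ _ _ _
      lift ℓ to ℕ using ‹0 ≤ ℓ›
      exact h ℓ (by omega)
    · exact fun h ℓ _ => h ℓ (by omega) (by omega) (by omega) (by omega)
  · simp only [Set.mem_iInter, aut_mem_image_symm_iterate, Finset.mem_Icc]
    constructor
    · intro h ℓ _ _ _ _
      lift ℓ to ℕ using ‹0 ≤ ℓ›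
      exact h ℓ (by omega)
    · exact fun h ℓ _ => h ℓ (by omega) (by omega) (by omega) (by omega)

lemma mem_gwaGradedSet_iff (M : TwoSidedIdeal A) (m : ℕ) (w : W) :
    w ∈ gwaGradedSet ι X Y (Jcomp α (M : Set A) m) ↔
      ∃ f : ℤ →₀ A, (∀ d, f d ∈ JIdeal α M m d) ∧ gwaSum ι X Y f = w := by
  simp only [gwaGradedSet, Set.mem_ofPred_eq, mem_Jcomp_iff, gwaSum_apply, eq_comm]

lemma JIdeal_Y_left_of_nonneg {M : TwoSidedIdeal A} {m : ℕ} {d : ℤ} (hd : 0 ≤ d) {a : A}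
    (ha : a ∈ JIdeal α M m d) : α a ∈ JIdeal α M m (1 + d) := by
  rw [mem_JIdeal] at *
  intro ℓ h1 h2 h3 h4
  rw [← aut_zpow_add_one]
  exact ha _ (by omega) (by omega) (by omega) (by omega)

lemma JIdeal_Y_left_mul {M : TwoSidedIdeal A} {m : ℕ} (hum : (α ^ (m : ℤ)) u ∈ M) {d : ℤ}
    {a : A} (ha : a ∈ JIdeal α M m d) : α a * α u ∈ JIdeal α M m (1 + d) := by
  rw [mem_JIdeal] at *
  intro ℓ h1 h2 h3 h4
  rw [map_mul, ← aut_zpow_add_one, ← aut_zpow_add_one]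
  rcases (show ℓ + 1 < m ∨ ℓ + 1 = m by omega) with h | h
  · exact M.mul_mem_right _ _ (ha _ (by omega) (by omega) (by omega) (by omega))
  · exact M.mul_mem_left _ _ (h ▸ hum)

lemma JIdeal_X_left_of_nonpos {M : TwoSidedIdeal A} {m : ℕ} {d : ℤ} (hd : d ≤ 0) {a : A}
    (ha : a ∈ JIdeal α M m d) : α.symm a ∈ JIdeal α M m (-1 + d) := by
  rw [mem_JIdeal] at *
  intro ℓ h1 h2 h3 h4
  rw [aut_symm_eq, ← aut_zpow_add]
  exact ha _ (by omega) (by omega) (by omega) (by omega)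

lemma JIdeal_X_left_mul {M : TwoSidedIdeal A} {m : ℕ} (hu0 : u ∈ M) {d : ℤ}
    {a : A} (ha : a ∈ JIdeal α M m d) : α.symm a * u ∈ JIdeal α M m (-1 + d) := by
  rw [mem_JIdeal] at *
  intro ℓ h1 h2 h3 h4
  rw [map_mul, aut_symm_eq, ← aut_zpow_add]
  rcases h1.lt_or_eq with h | rfl
  · exact M.mul_mem_right _ _ (ha _ (by omega) (by omega) (by omega) (by omega))
  · exact M.mul_mem_left _ _ (by simpa using hu0)

lemma JIdeal_Y_right_of_nonneg {M : TwoSidedIdeal A} {m : ℕ} {d : ℤ} (hd : 0 ≤ d) {a : A}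
    (ha : a ∈ JIdeal α M m d) : a ∈ JIdeal α M m (d + 1) := by
  rw [mem_JIdeal] at *
  exact fun ℓ h1 h2 h3 h4 => ha _ (by omega) (by omega) (by omega) (by omega)

lemma JIdeal_Y_right_mul {M : TwoSidedIdeal A} {m : ℕ} (hu0 : u ∈ M) {d : ℤ}
    {a : A} (ha : a ∈ JIdeal α M m d) :
    a * (α ^ (d + 1)) u ∈ JIdeal α M m (d + 1) := by
  rw [mem_JIdeal] at *
  intro ℓ h1 h2 h3 h4
  rw [map_mul, ← aut_zpow_add]
  rcases h3.lt_or_eq with h | h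
  · exact M.mul_mem_right _ _ (ha _ (by omega) (by omega) (by omega) (by omega))
  · exact M.mul_mem_left _ _ (by rw [← h]; simpa using hu0)

lemma JIdeal_X_right_of_nonpos {M : TwoSidedIdeal A} {m : ℕ} {d : ℤ} (hd : d ≤ 0) {a : A}
    (ha : a ∈ JIdeal α M m d) : a ∈ JIdeal α M m (d - 1) := by
  rw [mem_JIdeal] at *
  exact fun ℓ h1 h2 h3 h4 => ha _ (by omega) (by omega) (by omega) (by omega)

lemma JIdeal_X_right_mul {M : TwoSidedIdeal A} {m : ℕ} (hum : (α ^ (m : ℤ)) u ∈ M) {d : ℤ}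
    {a : A} (ha : a ∈ JIdeal α M m d) :
    a * (α ^ d) u ∈ JIdeal α M m (d - 1) := by
  rw [mem_JIdeal] at *
  intro ℓ h1 h2 h3 h4
  rw [map_mul, ← aut_zpow_add]
  rcases (show ℓ + d < m ∨ ℓ + d = m by omega) with h | h
  · exact M.mul_mem_right _ _ (ha _ (by omega) (by omega) (by omega) (by omega))
  · exact M.mul_mem_left _ _ (h ▸ hum)

/-- `J(M)` is a two-sided ideal of `W`; this needs only `u ∈ M` and `α^m(u) ∈ M`. -/
lemma exists_gradedIdeal (hW : IsGWA α u ι X Y) {M : TwoSidedIdeal A} {m : ℕ} (hu0 : u ∈ M)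
    (hum : (α ^ (m : ℤ)) u ∈ M) :
    ∃ T : TwoSidedIdeal W, ∀ w, w ∈ T ↔
      ∃ f : ℤ →₀ A, (∀ d, f d ∈ JIdeal α M m d) ∧ gwaSum ι X Y f = w := by
  let F : AddSubgroup (ℤ →₀ A) :=
    { carrier := {f | ∀ d, f d ∈ JIdeal α M m d}
      zero_mem' := fun d => (JIdeal α M m d).zero_mem
      add_mem' := fun hf hg d => (JIdeal α M m d).add_mem (hf d) (hg d)
      neg_mem' := fun hf d => (JIdeal α M m d).neg_mem (hf d) }
  let H := F.map (gwaSum ι X Y)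
  have hH : ∀ d a, a ∈ JIdeal α M m d → ι a * gwaMon X Y d ∈ H := by
    intro d a ha
    refine ⟨Finsupp.single d a, fun e => ?_, gwaSum_single ..⟩
    classical
    rw [Finsupp.single_apply]
    split_ifs with h
    · exact h ▸ ha
    · exact (JIdeal α M m e).zero_mem
  -- stability under an additive self-map of `W` is checked on homogeneous elements
  have hred : ∀ φ : W →+ W, (∀ d a, a ∈ JIdeal α M m d → φ (ι a * gwaMon X Y d) ∈ H) →
      ∀ w ∈ H, φ w ∈ H := by
    rintro φ hφ _ ⟨f, hf, rfl⟩
    rw [gwaSum_apply, Finsupp.sum, map_sum]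
    exact H.sum_mem fun d _ => hφ d _ (hf d)
  have hl : ∀ v w : W, w ∈ H → v * w ∈ H := by
    intro v
    refine hW.induction (p := fun v => ∀ w : W, w ∈ H → v * w ∈ H) ?_ ?_ ?_ ?_ ?_ v
    · intro b
      refine hred (AddMonoidHom.mulLeft (ι b)) fun d a ha => ?_
      rw [AddMonoidHom.coe_mulLeft, ← mul_assoc, ← map_mul]
      exact hH _ _ ((JIdeal α M m d).mul_mem_left _ _ ha)
    · refine hred (AddMonoidHom.mulLeft X) fun d a ha => ?_
      rw [AddMonoidHom.coe_mulLeft, ← mul_assoc, hW.Xa, mul_assoc]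
      rcases le_or_gt d 0 with hd | hd
      · rw [X_mul_gwaMon _ _ hd]
        exact hH _ _ (JIdeal_X_left_of_nonpos hd ha)
      · rw [hW.X_mon_of_pos hd, ← mul_assoc, ← map_mul]
        exact hH _ _ (JIdeal_X_left_mul hu0 ha)
    · refine hred (AddMonoidHom.mulLeft Y) fun d a ha => ?_
      rw [AddMonoidHom.coe_mulLeft, ← mul_assoc, hW.Ya, mul_assoc]
      rcases le_or_gt 0 d with hd | hd
      · rw [Y_mul_gwaMon _ _ hd]
        exact hH _ _ (JIdeal_Y_left_of_nonneg hd ha)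
      · rw [hW.Y_mon_of_neg hd, ← mul_assoc, ← map_mul]
        exact hH _ _ (JIdeal_Y_left_mul hum ha)
    · intro v v' h h' w hw
      rw [add_mul]
      exact H.add_mem (h w hw) (h' w hw)
    · intro v v' h h' w hw
      rw [mul_assoc]
      exact h _ (h' w hw)
  have hr : ∀ v w : W, w ∈ H → w * v ∈ H := by
    intro v
    refine hW.induction (p := fun v => ∀ w : W, w ∈ H → w * v ∈ H) ?_ ?_ ?_ ?_ ?_ v
    · intro b
      refine hred (AddMonoidHom.mulRight (ι b)) fun d a ha => ?_
      rw [AddMonoidHom.mulRight_apply, mul_assoc, hW.mon_mul, ← mul_assoc, ← map_mul]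
      exact hH _ _ ((JIdeal α M m d).mul_mem_right _ _ ha)
    · refine hred (AddMonoidHom.mulRight X) fun d a ha => ?_
      rw [AddMonoidHom.mulRight_apply, mul_assoc]
      rcases le_or_gt d 0 with hd | hd
      · rw [gwaMon_mul_X _ _ hd]
        exact hH _ _ (JIdeal_X_right_of_nonpos hd ha)
      · rw [hW.mon_X_of_pos hd, ← mul_assoc, ← map_mul]
        exact hH _ _ (JIdeal_X_right_mul hum ha)
    · refine hred (AddMonoidHom.mulRight Y) fun d a ha => ?_
      rw [AddMonoidHom.mulRight_apply, mul_assoc]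
      rcases le_or_gt 0 d with hd | hd
      · rw [gwaMon_mul_Y _ _ hd]
        exact hH _ _ (JIdeal_Y_right_of_nonneg hd ha)
      · rw [hW.mon_Y_of_neg hd, ← mul_assoc, ← map_mul]
        exact hH _ _ (JIdeal_Y_right_mul hu0 ha)
    · intro v v' h h' w hw
      rw [mul_add]
      exact H.add_mem (h w hw) (h' w hw)
    · intro v v' h h' w hw
      rw [← mul_assoc]
      exact h' _ (h w hw)
  refine ⟨.mk' (H : Set W) H.zero_mem H.add_mem H.neg_mem (hl _ _) (hr _ _), fun w => ?_⟩
  rw [TwoSidedIdeal.mem_mk']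
  rfl

end JIdeal

/-! ### Maximality of `J(M)` -/

section Maximal

variable {A W : Type*} [Ring A] [Ring W] {α : A ≃+* A} {u : A} {ι : A →+* W} {X Y : W}

/-- A central `e` whose translate `α^ℓ(e)` can be cancelled modulo `M`, while `α^k(e) ∈ M` at the
other positions `k ∈ [0, m)`: the product of the `α^{-k}(u)`, `k ≠ ℓ`. Multiplying by `e` isolates
position `ℓ`. -/
lemma exists_separating (hu : ∀ a : A, u * a = a * u) {M : TwoSidedIdeal A} {m : ℕ} (hu0 : u ∈ M)
    (hgood : ∀ k : ℤ, k ≠ 0 → -m < k → k < m → ∀ a, a * (α ^ k) u ∈ M → a ∈ M)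
    (ℓ : ℤ) (h0 : 0 ≤ ℓ) (hℓ : ℓ < m) :
    ∃ e : A, (∀ a, e * a = a * e) ∧ (∀ k : ℤ, 0 ≤ k → k < m → k ≠ ℓ → (α ^ k) e ∈ M) ∧
      ∀ a, a * (α ^ ℓ) e ∈ M → a ∈ M := by
  suffices h : ∀ n : ℕ, n ≤ m → ∃ e : A, (∀ a, e * a = a * e) ∧
      (∀ k : ℤ, 0 ≤ k → k < n → k ≠ ℓ → (α ^ k) e ∈ M) ∧ ∀ a, a * (α ^ ℓ) e ∈ M → a ∈ M from
    h m le_rfl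
  intro n
  induction n with
  | zero => exact fun _ => ⟨1, by simp, fun k _ _ => by simp at *; omega, by simp⟩
  | succ n ih =>
    intro hn
    obtain ⟨e, hc, hz, hg⟩ := ih (by omega)
    by_cases hnℓ : (n : ℤ) = ℓ
    · exact ⟨e, hc, fun k h1 h2 h3 => hz k h1 (by push_cast at h2; omega) h3, hg⟩
    · refine ⟨e * (α ^ (-n : ℤ)) u, fun a => ?_, fun k h1 h2 h3 => ?_, fun a ha => ?_⟩
      · rw [mul_assoc, aut_zpow_central α hu, ← mul_assoc, hc, mul_assoc]
      · rw [map_mul]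
        rcases (show k < n ∨ k = n by push_cast at h2; omega) with h | rfl
        · exact M.mul_mem_right _ _ (hz k h1 h h3)
        · rw [aut_zpow_apply_neg]
          exact M.mul_mem_left _ _ hu0
      · rw [map_mul, ← aut_zpow_add, ← mul_assoc] at ha
        exact hg _ (hgood _ (by omega) (by omega) (by omega) _ ha)

/-- An ideal containing `J(M)` and an element outside `J(M)` contains a homogeneous element outside
`J(M)`. -/
lemma exists_homogeneous (hW : IsGWA α u ι X Y) {M : TwoSidedIdeal A} {m : ℕ} (hu0 : u ∈ M)
    (hgood : ∀ k : ℤ, k ≠ 0 → -m < k → k < m → ∀ a, a * (α ^ k) u ∈ M → a ∈ M)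
    (T : TwoSidedIdeal W) (hT : ∀ d, ∀ a ∈ JIdeal α M m d, ι a * gwaMon X Y d ∈ T)
    (f : ℤ →₀ A) (hf : gwaSum ι X Y f ∈ T) (d : ℤ) (hd : f d ∉ JIdeal α M m d) :
    ∃ (b : A) (ℓ : ℤ), 0 ≤ ℓ ∧ ℓ < m ∧ 0 ≤ ℓ + d ∧ ℓ + d < m ∧ (α ^ ℓ) b ∉ M ∧ ι b * gwaMon X Y d ∈ T := by
  rw [mem_JIdeal] at hd
  push Not at hd
  obtain ⟨ℓ, h1, h2, h3, h4, h5⟩ := hd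
  obtain ⟨e, hec, hez, heg⟩ := exists_separating hW.central hu0 hgood ℓ h1 h2
  obtain ⟨e', -, hez', heg'⟩ := exists_separating hW.central hu0 hgood (ℓ + d) h3 h4
  refine ⟨e * f d * (α ^ d) e', ℓ, h1, h2, h3, h4, fun h => h5 ?_, ?_⟩
  · rw [map_mul, map_mul, ← aut_zpow_add] at h
    have h := heg' _ h
    rw [← map_mul, hec, map_mul] at h
    exact heg _ h
  · have key : ι e * gwaSum ι X Y f * ι e' ∈ T := T.mul_mem_right _ _ (T.mul_mem_left _ _ hf)
    have hterm : ∀ k, ι e * (ι (f k) * gwaMon X Y k) * ι e' =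
        ι (e * f k * (α ^ k) e') * gwaMon X Y k := fun k => by
      simp only [mul_assoc, hW.mon_mul, map_mul]
    have hds : d ∈ f.support := by
      rw [Finsupp.mem_support_iff]
      intro h
      exact h5 (by rw [h, map_zero]; exact M.zero_mem)
    rw [gwaSum_apply, Finsupp.sum, Finset.mul_sum, Finset.sum_mul,
      ← Finset.add_sum_erase _ _ hds] at key
    rw [← hterm]
    refine (add_mem_cancel_right ?_).1 key
    refine sum_mem fun k hk => ?_
    rw [hterm]
    refine hT _ _ (mem_JIdeal.2 fun j j1 j2 j3 j4 => ?_)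
    rw [map_mul, map_mul, ← aut_zpow_add]
    by_cases hj : j = ℓ
    · have := Finset.ne_of_mem_erase hk
      exact M.mul_mem_left _ _ (hez' _ j3 j4 (by omega))
    · exact M.mul_mem_right _ _ (M.mul_mem_right _ _ (hez _ j1 j2 hj))

/-- Homogeneous elements outside `J(M)` can be pushed down to degree `0`. -/
lemma exists_degree_zero (hW : IsGWA α u ι X Y) {M : TwoSidedIdeal A} {m : ℕ}
    (hgood : ∀ k : ℤ, k ≠ 0 → -m < k → k < m → ∀ a, a * (α ^ k) u ∈ M → a ∈ M)
    (T : TwoSidedIdeal W) (ℓ : ℤ) (h1 : 0 ≤ ℓ) (h2 : ℓ < m) (n : ℕ) :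
    ∀ (d : ℤ) (b : A), d.natAbs = n → 0 ≤ ℓ + d → ℓ + d < m → (α ^ ℓ) b ∉ M →
      ι b * gwaMon X Y d ∈ T → ∃ b', (α ^ ℓ) b' ∉ M ∧ ι b' ∈ T := by
  induction n with
  | zero =>
    intro d b hd _ _ hb hT
    obtain rfl : d = 0 := by omega
    exact ⟨b, hb, by simpa [gwaMon_zero] using hT⟩
  | succ n ih =>
    intro d b hd h3 h4 hb hT
    rcases lt_trichotomy d 0 with h | h | h
    · refine ih (d + 1) (b * (α ^ (d + 1)) u) (by omega) (by omega) (by omega) (fun hM => hb ?_) ?_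
      · rw [map_mul, ← aut_zpow_add] at hM
        exact hgood _ (by omega) (by omega) (by omega) _ hM
      · rw [map_mul, mul_assoc, ← hW.mon_Y_of_neg h, ← mul_assoc]
        exact T.mul_mem_right _ _ hT
    · omega
    · refine ih (d - 1) (b * (α ^ d) u) (by omega) (by omega) (by omega) (fun hM => hb ?_) ?_
      · rw [map_mul, ← aut_zpow_add] at hM
        exact hgood _ (by omega) (by omega) (by omega) _ hM
      · rw [map_mul, mul_assoc, ← hW.mon_X_of_pos h, ← mul_assoc]
        exact T.mul_mem_right _ _ hT

/-- In degree `0`, conjugating by `X` or `Y` moves between the positions `ℓ ∈ [0, m)`. -/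
lemma exists_all_positions (hW : IsGWA α u ι X Y) {M : TwoSidedIdeal A} {m : ℕ}
    (hgood : ∀ k : ℤ, k ≠ 0 → -m < k → k < m → ∀ a, a * (α ^ k) u ∈ M → a ∈ M)
    (T : TwoSidedIdeal W) (ℓ : ℤ) (h1 : 0 ≤ ℓ) (h2 : ℓ < m) (b : A) (hb : (α ^ ℓ) b ∉ M)
    (hT : ι b ∈ T) (n : ℕ) :
    ∀ k : ℤ, 0 ≤ k → k < m → (k - ℓ).natAbs = n → ∃ b', (α ^ k) b' ∉ M ∧ ι b' ∈ T := by
  induction n with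
  | zero =>
    intro k _ _ hk
    obtain rfl : k = ℓ := by omega
    exact ⟨b, hb, hT⟩
  | succ n ih =>
    intro k h3 h4 hk
    rcases lt_or_gt_of_ne (show k ≠ ℓ by omega) with h | h
    · obtain ⟨c, hc, hcT⟩ := ih (k + 1) (by omega) (by omega) (by omega)
      refine ⟨α c * α u, fun hM => hc ?_, ?_⟩
      · rw [map_mul, ← aut_zpow_add_one, ← aut_zpow_add_one] at hM
        exact hgood _ (by omega) (by omega) (by omega) _ hM
      · rw [map_mul, ← hW.YX, ← mul_assoc, ← hW.Ya]
        exact T.mul_mem_right _ _ (T.mul_mem_left _ _ hcT)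
    · obtain ⟨c, hc, hcT⟩ := ih (k - 1) (by omega) (by omega) (by omega)
      refine ⟨α.symm c * u, fun hM => hc ?_, ?_⟩
      · rw [map_mul, aut_symm_eq, ← aut_zpow_add] at hM
        exact hgood _ (by omega) (by omega) (by omega) _ hM
      · rw [map_mul, ← hW.XY, ← mul_assoc, ← hW.Xa]
        exact T.mul_mem_right _ _ (T.mul_mem_left _ _ hcT)

/-- A maximal two-sided ideal `M` is comaximal with any two-sided ideal not contained in it. -/
lemma IsMaximalTwoSided.exists_one_sub_mem {R : Type*} [Ring R] {M : TwoSidedIdeal R}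
    (hM : IsMaximalTwoSided M) (K : TwoSidedIdeal R) {b : R} (hb : b ∉ M) (hbK : b ∈ K) :
    ∃ x ∈ K, 1 - x ∈ M := by
  have h : M ⊔ K = ⊤ := hM.2 _ <| lt_of_le_of_ne le_sup_left fun h =>
    hb (h ▸ (le_sup_right : K ≤ M ⊔ K) hbK)
  have h1 : (1 : R) ∈ M ⊔ K := h ▸ trivial
  obtain ⟨y, hy, x, hx, hxy⟩ := TwoSidedIdeal.mem_sup.1 h1
  exact ⟨x, hx, by rw [← hxy, add_sub_cancel_right]; exact hy⟩

/-- An ideal `T` containing `J(M)` and an element `∑ f d · mon d` outside `J(M)` is all of `W`. For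
each position `k`, maximality of `M` provides `x` with `ι x ∈ T` and `α^k(1 - x) ∈ M`; the product of
the factors `1 - x` is then `1` modulo `T`, and lies in the degree-`0` part of `J(M)`. -/
lemma isMaximal_gradedIdeal (hW : IsGWA α u ι X Y) {M : TwoSidedIdeal A} {m : ℕ} (hu0 : u ∈ M)
    (hgood : ∀ k : ℤ, k ≠ 0 → -m < k → k < m → ∀ a, a * (α ^ k) u ∈ M → a ∈ M)
    (hM : IsMaximalTwoSided M)
    (T : TwoSidedIdeal W) (hT : ∀ d, ∀ a ∈ JIdeal α M m d, ι a * gwaMon X Y d ∈ T)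
    (f : ℤ →₀ A) (hf : gwaSum ι X Y f ∈ T) (d : ℤ) (hd : f d ∉ JIdeal α M m d) : T = ⊤ := by
  obtain ⟨b, ℓ, h1, h2, h3, h4, hb, hbT⟩ := exists_homogeneous hW hu0 hgood T hT f hf d hd
  obtain ⟨b, hb, hbT⟩ := exists_degree_zero hW hgood T ℓ h1 h2 _ d b rfl h3 h4 hb hbT
  have hpos : ∀ k : ℤ, 0 ≤ k → k < m → ∃ x, ι x ∈ T ∧ (α ^ k) (1 - x) ∈ M := by
    intro k hk0 hkm
    obtain ⟨c, hc, hcT⟩ := exists_all_positions hW hgood T ℓ h1 h2 b hb hbT _ k hk0 hkm rfl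
    obtain ⟨x, hx, hxM⟩ := hM.exists_one_sub_mem
      (TwoSidedIdeal.comap (ι.comp ((α ^ (-k) : A ≃+* A) : A →+* A)) T) hc
      (by rw [TwoSidedIdeal.mem_comap]; simpa [aut_zpow_neg_apply] using hcT)
    rw [TwoSidedIdeal.mem_comap] at hx
    refine ⟨(α ^ (-k)) x, by simpa using hx, ?_⟩
    rwa [map_sub, map_one, aut_zpow_apply_neg]
  have hprod : ∀ n : ℕ, n ≤ m → ∃ y, ι (1 - y) ∈ T ∧ ∀ k : ℤ, 0 ≤ k → k < n → (α ^ k) y ∈ M := by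
    intro n
    induction n with
    | zero => exact fun _ => ⟨1, by simp, fun k _ _ => by simp at *; omega⟩
    | succ n ih =>
      intro hn
      obtain ⟨y, hy, hyM⟩ := ih (by omega)
      obtain ⟨x, hx, hxM⟩ := hpos n (by omega) (by omega)
      refine ⟨y * (1 - x), ?_, fun k hk0 hkn => ?_⟩
      · rw [show 1 - y * (1 - x) = (1 - y) + y * x by noncomm_ring, map_add, map_mul]
        exact T.add_mem hy (T.mul_mem_left _ _ hx)
      · rw [map_mul]
        rcases (show k < n ∨ k = n by push_cast at hkn; omega) with h | rfl
        · exact M.mul_mem_right _ _ (hyM k hk0 h)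
        · exact M.mul_mem_left _ _ hxM
  obtain ⟨y, hy, hyM⟩ := hprod m le_rfl
  have hyT : ι y ∈ T := by
    have := hT 0 y (mem_JIdeal.2 fun k hk0 hkm _ _ => hyM k hk0 hkm)
    simpa [gwaMon_zero] using this
  refine T.one_mem_iff.1 ?_
  have := T.add_mem hy hyT
  simpa using this

end Maximal

/-! ### Ideals containing powers of `X` and `Y` -/

section Powers

variable {A W : Type*} [Ring A] [Ring W] {α : A ≃+* A} {u : A} {ι : A →+* W} {X Y : W}

/-- Multiplying by `X` on the left and on the right passes from degree `d + 1` to degree `d` in an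
ideal. -/
lemma descend_nonneg (hW : IsGWA α u ι X Y) (P : TwoSidedIdeal W) {d : ℤ} (hd : 0 ≤ d) {b c : A}
    (hb : ι (α b) * gwaMon X Y (d + 1) ∈ P) (hc : ι c * gwaMon X Y (d + 1) ∈ P) :
    ι (b * u + c * (α ^ (d + 1)) u) * gwaMon X Y d ∈ P := by
  have h1 := P.mul_mem_left X _ hb
  have h2 := P.mul_mem_right _ X hc
  rw [← mul_assoc, hW.Xa, mul_assoc, hW.X_mon_of_pos (by omega), ← mul_assoc, ← map_mul] at h1
  rw [mul_assoc, hW.mon_X_of_pos (by omega), ← mul_assoc, ← map_mul] at h2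
  rw [map_add, add_mul]
  convert P.add_mem h1 h2 using 3 <;> simp

lemma descend_nonpos (hW : IsGWA α u ι X Y) (P : TwoSidedIdeal W) {d : ℤ} (hd : d ≤ 0) {b c : A}
    (hb : ι (α.symm b) * gwaMon X Y (d - 1) ∈ P) (hc : ι c * gwaMon X Y (d - 1) ∈ P) :
    ι (b * α u + c * (α ^ d) u) * gwaMon X Y d ∈ P := by
  have h1 := P.mul_mem_left Y _ hb
  have h2 := P.mul_mem_right _ Y hc
  rw [← mul_assoc, hW.Ya, mul_assoc, hW.Y_mon_of_neg (by omega), ← mul_assoc, ← map_mul] at h1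
  rw [mul_assoc, hW.mon_Y_of_neg (by omega), ← mul_assoc, ← map_mul] at h2
  rw [map_add, add_mul]
  convert P.add_mem h1 h2 using 3 <;> simp

/-- If a proper ideal contains a power of `Y`, it contains `Y^m`: from `Y^{r+1} ∈ P` one gets
`(Au + Aα^{r+1}(u)) Y^r ⊆ P`, so the least such exponent is `m`. -/
lemma Y_pow_mem (hW : IsGWA α u ι X Y) {m : ℕ}
    (hco : ∀ i : ℕ, 1 ≤ i → i ≠ m → ∃ b c : A, 1 = b * u + c * (α ^ (i : ℤ)) u)
    (P : TwoSidedIdeal W) (hP : P ≠ ⊤) (h : ∃ r : ℕ, Y ^ r ∈ P) : Y ^ m ∈ P := by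
  classical
  have hr := Nat.find_spec h
  have hmin := fun k => Nat.find_min (m := k) h
  generalize Nat.find h = r at hr hmin
  rcases r with _ | r
  · exact absurd (P.one_mem_iff.1 (by simpa using hr)) hP
  · by_cases hrm : r + 1 = m
    · exact hrm ▸ hr
    · obtain ⟨b, c, hbc⟩ := hco (r + 1) (by omega) hrm
      have hr' : gwaMon X Y ((r : ℤ) + 1) ∈ P := by
        rw [← Nat.cast_succ, gwaMon_natCast]; exact hr
      have := descend_nonneg hW P (b := b) (c := c) (Int.natCast_nonneg r)
        (P.mul_mem_left _ _ hr') (P.mul_mem_left _ _ hr')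
      rw [← Nat.cast_succ, ← hbc, map_one, one_mul, gwaMon_natCast] at this
      exact absurd this (hmin r (by omega))

/-- Any ideal containing `X^m` and `Y^m` contains `J(M)`. -/
lemma gradedIdeal_le (hW : IsGWA α u ι X Y) {m : ℕ} {M : TwoSidedIdeal A}
    (hM : ∀ a ∈ M, ∃ b c, a = b * u + c * (α ^ (m : ℤ)) u)
    (hco : ∀ i j : ℤ, i ≠ j → i - j ≠ m → j - i ≠ m →
      ∃ b c : A, 1 = b * (α ^ i) u + c * (α ^ j) u)
    (P : TwoSidedIdeal W) (hX : X ^ m ∈ P) (hY : Y ^ m ∈ P) (d : ℤ) (a : A)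
    (ha : a ∈ JIdeal α M m d) : ι a * gwaMon X Y d ∈ P := by
  have hYd : ∀ n : ℕ, ∀ d : ℤ, 0 ≤ d → m ≤ n + d → ∀ a ∈ JIdeal α M m d,
      ι a * gwaMon X Y d ∈ P := by
    intro n
    induction n with
    | zero =>
      intro d hd hmd a _
      refine P.mul_mem_left _ _ ?_
      rw [gwaMon_of_nonneg _ _ hd, show d.toNat = m + (d.toNat - m) by omega, pow_add]
      exact P.mul_mem_right _ _ hY
    | succ n ih =>
      intro d hd hmd a ha
      by_cases hdm : d + 1 = m
      · obtain ⟨b, c, rfl⟩ := hM a (by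
          simpa using mem_JIdeal.1 ha 0 le_rfl (by omega) (by omega) (by omega))
        rw [← hdm]
        have h := ih (d + 1) (by omega) (by omega)
        exact descend_nonneg hW P hd (h _ (mem_JIdeal.2 fun _ _ _ _ _ => by omega))
          (h _ (mem_JIdeal.2 fun _ _ _ _ _ => by omega))
      · by_cases hlt : m ≤ d
        · exact ih d hd (by omega) a ha
        · obtain ⟨b, c, hbc⟩ := hco 0 (d + 1) (by omega) (by omega) (by omega)
          rw [zpow_zero, RingAut.one_apply] at hbc
          have h := ih (d + 1) (by omega) (by push_cast at hmd; omega)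
          have := descend_nonneg hW P hd (b := a * b) (c := a * c)
            (h _ (by
              rw [map_mul, add_comm]
              exact (JIdeal α M m _).mul_mem_right _ _ (JIdeal_Y_left_of_nonneg hd ha)))
            (h _ ((JIdeal α M m _).mul_mem_right _ _ (JIdeal_Y_right_of_nonneg hd ha)))
          rwa [mul_assoc, mul_assoc, ← mul_add, ← hbc, mul_one] at this
  have hXd : ∀ n : ℕ, ∀ d : ℤ, d ≤ 0 → m ≤ n - d → ∀ a ∈ JIdeal α M m d,
      ι a * gwaMon X Y d ∈ P := by
    intro n
    induction n with
    | zero =>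
      intro d hd hmd a _
      refine P.mul_mem_left _ _ ?_
      rw [gwaMon_of_nonpos _ _ hd, show (-d).toNat = m + ((-d).toNat - m) by omega, pow_add]
      exact P.mul_mem_right _ _ hX
    | succ n ih =>
      intro d hd hmd a ha
      by_cases hdm : d - 1 = -m
      · obtain ⟨b, c, hbc⟩ := hM _
          (mem_JIdeal.1 ha (-d) (by omega) (by omega) (by omega) (by omega))
        -- pulling back along `α^{m-1} = α^{-d}` turns `M` into `A α^d(u) + A α(u)`
        have hbc := congrArg (α ^ d) hbc
        rw [aut_zpow_apply_neg, map_add, map_mul, map_mul, ← aut_zpow_add,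
          show d + (m : ℤ) = 1 by omega, zpow_one, add_comm] at hbc
        rw [hbc]
        have h := ih (d - 1) (by omega) (by omega)
        exact descend_nonpos hW P hd (h _ (mem_JIdeal.2 fun _ _ _ _ _ => by omega))
          (h _ (mem_JIdeal.2 fun _ _ _ _ _ => by omega))
      · by_cases hlt : m ≤ -d
        · exact ih d hd (by omega) a ha
        · obtain ⟨b, c, hbc⟩ := hco 1 d (by omega) (by omega) (by omega)
          rw [zpow_one] at hbc
          have h := ih (d - 1) (by omega) (by push_cast at hmd; omega)
          have := descend_nonpos hW P hd (b := a * b) (c := a * c)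
            (h _ (by
              rw [map_mul, show d - 1 = -1 + d by omega]
              exact (JIdeal α M m _).mul_mem_right _ _ (JIdeal_X_left_of_nonpos hd ha)))
            (h _ ((JIdeal α M m _).mul_mem_right _ _ (JIdeal_X_right_of_nonpos hd ha)))
          rwa [mul_assoc, mul_assoc, ← mul_add, ← hbc, mul_one] at this
  rcases le_total 0 d with hd | hd
  · exact hYd m d hd (by omega) a ha
  · exact hXd m d hd (by omega) a ha

end Powers

/-! ### The `α`-simple case -/

section Simple

variable {A W : Type*} [Ring A] [Ring W] {α : A ≃+* A} {u : A} {ι : A →+* W} {X Y : W}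

/-- The element `Yⁱ s Yʲ` for the skew Laurent polynomial `s = ∑ d, f d · Y^d`, interpreted in `W`
by means of `gwaMon` (which is faithful once all the exponents `d + i + j` are nonnegative). -/
def laurentSum (α : A ≃+* A) (ι : A →+* W) (X Y : W) (i j : ℤ) : (ℤ →₀ A) →+ W :=
  Finsupp.liftAddHom fun d => (AddMonoidHom.mulRight (gwaMon X Y (d + i + j))).comp
    ((ι.comp ((α ^ i : A ≃+* A) : A →+* A) : A →+* W) : A →+ W)

lemma laurentSum_single (i j d : ℤ) (a : A) :
    laurentSum α ι X Y i j (Finsupp.single d a) = ι ((α ^ i) a) * gwaMon X Y (d + i + j) := by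
  simp [laurentSum]

lemma laurentSum_smul (i j : ℤ) (a : A) (f : ℤ →₀ A) :
    laurentSum α ι X Y i j (a • f) = ι ((α ^ i) a) * laurentSum α ι X Y i j f := by
  induction f using Finsupp.induction_linear with
  | zero => simp
  | add f g hf hg => rw [smul_add, map_add, map_add, hf, hg, mul_add]
  | single d b =>
    rw [Finsupp.smul_single, laurentSum_single, laurentSum_single, smul_eq_mul, map_mul, map_mul,
      mul_assoc]

/-- Right multiplication of the skew Laurent polynomial `∑ d, f d · Y^d` by `a ∈ A`. -/
def laurentMulRight (α : A ≃+* A) (a : A) : (ℤ →₀ A) →+ (ℤ →₀ A) :=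
  Finsupp.liftAddHom fun d =>
    (Finsupp.singleAddHom d).comp (AddMonoidHom.mulRight ((α ^ d) a))

lemma laurentMulRight_single (a : A) (d : ℤ) (b : A) :
    laurentMulRight α a (Finsupp.single d b) = Finsupp.single d (b * (α ^ d) a) := by
  simp [laurentMulRight]

lemma laurentMulRight_apply (a : A) (f : ℤ →₀ A) (d : ℤ) :
    laurentMulRight α a f d = f d * (α ^ d) a := by
  classical
  induction f using Finsupp.induction_linear with
  | zero => simp
  | add f g hf hg => rw [map_add, Finsupp.add_apply, Finsupp.add_apply, hf, hg, add_mul]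
  | single e b =>
    rw [laurentMulRight_single, Finsupp.single_apply, Finsupp.single_apply]
    split_ifs with h
    · rw [h]
    · rw [zero_mul]

lemma laurentSum_mulRight (hW : IsGWA α u ι X Y) (i j : ℤ) (a : A) (f : ℤ →₀ A) :
    laurentSum α ι X Y i j (laurentMulRight α a f) =
      laurentSum α ι X Y i j f * ι ((α ^ (-j)) a) := by
  induction f using Finsupp.induction_linear with
  | zero => simp
  | add f g hf hg => rw [map_add, map_add, map_add, hf, hg, add_mul]
  | single d b =>
    rw [laurentMulRight_single, laurentSum_single, laurentSum_single, mul_assoc, hW.mon_mul,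
      ← mul_assoc, ← map_mul, map_mul, ← aut_zpow_add, ← aut_zpow_add]
    congr 5
    omega

/-- Conjugation by `Y` on coefficients. -/
lemma laurentSum_mapRange (i j k : ℤ) (f : ℤ →₀ A) :
    laurentSum α ι X Y i j (Finsupp.mapRange (α ^ k) (map_zero _) f) =
      laurentSum α ι X Y (i + k) (j - k) f := by
  induction f using Finsupp.induction_linear with
  | zero => simp
  | add f g hf hg =>
    rw [Finsupp.mapRange_add (hf := map_zero _) (fun x y => map_add (α ^ k) x y), map_add,
      map_add, hf, hg]
  | single d b =>
    rw [Finsupp.mapRange_single, laurentSum_single, laurentSum_single, ← aut_zpow_add]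
    congr 2
    omega

/-- The ideal of the skew Laurent ring `A[Y^{±1}; α]` generated by the ideal `P` of `W`: a Laurent
polynomial `s` belongs to it when `Yⁱ s Yʲ ∈ P` for all large `i` and `j`. Denominators are cleared
on both sides, so that no Noetherian hypothesis is needed to see that this is an ideal. -/
def InLaurent (α : A ≃+* A) (ι : A →+* W) (X Y : W) (P : TwoSidedIdeal W) (f : ℤ →₀ A) : Prop :=
  ∃ N : ℤ, ∀ i j : ℤ, N ≤ i → N ≤ j → laurentSum α ι X Y i j f ∈ P

variable {P : TwoSidedIdeal W}

lemma InLaurent.zero : InLaurent α ι X Y P 0 :=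
  ⟨0, fun i j _ _ => by rw [map_zero]; exact P.zero_mem⟩

lemma InLaurent.add {f g : ℤ →₀ A} (hf : InLaurent α ι X Y P f) (hg : InLaurent α ι X Y P g) :
    InLaurent α ι X Y P (f + g) := by
  obtain ⟨N, hN⟩ := hf
  obtain ⟨N', hN'⟩ := hg
  refine ⟨max N N', fun i j hi hj => ?_⟩
  rw [map_add]
  exact P.add_mem (hN i j (by omega) (by omega)) (hN' i j (by omega) (by omega))

lemma InLaurent.neg {f : ℤ →₀ A} (hf : InLaurent α ι X Y P f) : InLaurent α ι X Y P (-f) := by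
  obtain ⟨N, hN⟩ := hf
  refine ⟨N, fun i j hi hj => ?_⟩
  rw [map_neg]
  exact P.neg_mem (hN i j hi hj)

lemma InLaurent.sub {f g : ℤ →₀ A} (hf : InLaurent α ι X Y P f) (hg : InLaurent α ι X Y P g) :
    InLaurent α ι X Y P (f - g) := by
  rw [sub_eq_add_neg]
  exact hf.add hg.neg

lemma InLaurent.smul {f : ℤ →₀ A} (hf : InLaurent α ι X Y P f) (a : A) :
    InLaurent α ι X Y P (a • f) := by
  obtain ⟨N, hN⟩ := hf
  refine ⟨N, fun i j hi hj => ?_⟩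
  rw [laurentSum_smul]
  exact P.mul_mem_left _ _ (hN i j hi hj)

lemma InLaurent.mulRight (hW : IsGWA α u ι X Y) {f : ℤ →₀ A} (hf : InLaurent α ι X Y P f) (a : A) :
    InLaurent α ι X Y P (laurentMulRight α a f) := by
  obtain ⟨N, hN⟩ := hf
  refine ⟨N, fun i j hi hj => ?_⟩
  rw [laurentSum_mulRight hW]
  exact P.mul_mem_right _ _ (hN i j hi hj)

lemma InLaurent.mapRange {f : ℤ →₀ A} (hf : InLaurent α ι X Y P f) (k : ℤ) :
    InLaurent α ι X Y P (Finsupp.mapRange (α ^ k) (map_zero _) f) := by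
  obtain ⟨N, hN⟩ := hf
  refine ⟨N + |k|, fun i j hi hj => ?_⟩
  rw [laurentSum_mapRange]
  have := abs_le.1 (le_refl |k|)
  exact hN _ _ (by omega) (by omega)

/-- Since `u` is regular, so are its translates, which are the factors arising when `Y^n` is absorbed
into a monomial of negative degree. -/
lemma exists_regular_mon_mul_Y_pow (hW : IsGWA α u ι X Y) (hureg : ∀ a : A, a * u = 0 → a = 0)
    (n : ℕ) (d : ℤ) : ∃ c : A, (∀ a, a * c = 0 → a = 0) ∧
      gwaMon X Y d * Y ^ n = ι c * gwaMon X Y (d + n) := by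
  induction n with
  | zero => exact ⟨1, by simp, by simp⟩
  | succ n ih =>
    obtain ⟨c, hc, h⟩ := ih
    rcases le_or_gt 0 (d + n) with hd | hd
    · refine ⟨c, hc, ?_⟩
      rw [pow_succ, ← mul_assoc, h, mul_assoc, gwaMon_mul_Y _ _ hd, Nat.cast_succ, add_assoc]
    · refine ⟨c * (α ^ (d + n + 1)) u, fun a ha => hc _ ?_, ?_⟩
      · rw [← mul_assoc] at ha
        have := congrArg (α ^ (-(d + n + 1))) ha
        rw [map_mul, aut_zpow_neg_apply, map_zero] at this
        exact (map_eq_zero_iff _ (α ^ (-(d + n + 1))).injective).1 (hureg _ this)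
      · rw [pow_succ, ← mul_assoc, h, mul_assoc, hW.mon_Y_of_neg hd, Nat.cast_succ, add_assoc,
          map_mul, mul_assoc]

/-- `W` embeds in the skew Laurent ring because `u` is regular, so a nonzero ideal of `W` generates a
nonzero Laurent ideal. -/
lemma exists_inLaurent (hW : IsGWA α u ι X Y) (hureg : ∀ a : A, a * u = 0 → a = 0)
    (hP : P ≠ ⊥) : ∃ f : ℤ →₀ A, f ≠ 0 ∧ InLaurent α ι X Y P f := by
  obtain ⟨w, hw, hw0⟩ : ∃ w ∈ P, w ≠ 0 := by
    by_contra! h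
    exact hP (le_bot_iff.1 fun w hw => (TwoSidedIdeal.mem_bot W).2 (h w hw))
  obtain ⟨g, rfl⟩ := hW.bijective.2 w
  have hg0 : g ≠ 0 := fun h => hw0 (by rw [h, map_zero])
  obtain ⟨n, hn⟩ : ∃ n : ℕ, ∀ d ∈ g.support, 0 ≤ d + n := by
    refine ⟨∑ d ∈ g.support, d.natAbs, fun d hd => ?_⟩
    have := Finset.single_le_sum (f := Int.natAbs) (fun _ _ => Nat.zero_le _) hd
    omega
  choose c hc hmon using exists_regular_mon_mul_Y_pow hW hureg n
  let φ : (ℤ →₀ A) →+ (ℤ →₀ A) := Finsupp.liftAddHom fun d =>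
    (Finsupp.singleAddHom d).comp (AddMonoidHom.mulRight (c d))
  have hφs : ∀ d a, φ (Finsupp.single d a) = Finsupp.single d (a * c d) := by simp [φ]
  have hφ : φ g = g.sum fun d a => Finsupp.single d (a * c d) := rfl
  have hφa : ∀ f d, φ f d = f d * c d := by
    classical
    intro f d
    induction f using Finsupp.induction_linear with
    | zero => simp
    | add f g hf hg => rw [map_add, Finsupp.add_apply, Finsupp.add_apply, hf, hg, add_mul]
    | single e b =>
      rw [hφs, Finsupp.single_apply, Finsupp.single_apply]
      split_ifs with h
      · rw [h]
      · rw [zero_mul]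
  refine ⟨φ g, fun h => hg0 ?_, n, fun i j hi hj => ?_⟩
  · ext d
    exact hc d _ (by rw [← hφa, h, Finsupp.zero_apply])
  · have key := P.mul_mem_right _ (gwaMon X Y (j - n))
      (P.mul_mem_left (gwaMon X Y i) _ (P.mul_mem_right _ (Y ^ n) hw))
    convert key using 1
    rw [hφ, gwaSum_apply, Finsupp.sum, Finsupp.sum, map_sum, Finset.sum_mul, Finset.mul_sum,
      Finset.sum_mul]
    refine Finset.sum_congr rfl fun d hd => ?_
    rw [laurentSum_single, mul_assoc (ι (g d)), hmon, ← mul_assoc (ι (g d)), ← map_mul,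
      ← mul_assoc (gwaMon X Y i), hW.mon_mul, mul_assoc (ι _),
      gwaMon_add_of_nonneg _ _ (by omega) (hn d hd), mul_assoc (ι _),
      gwaMon_add_of_nonneg _ _ (by have := hn d hd; omega) (by omega)]
    congr 2
    omega

lemma zpow_fixed {v : A} (hv : α v = v) (k : ℤ) : (α ^ k) v = v := by
  have hn : ∀ n : ℕ, (α ^ (n : ℤ)) v = v := fun n => by
    induction n with
    | zero => simp
    | succ n ih => rw [Nat.cast_succ, aut_zpow_add_one, hv, ih]
  obtain ⟨n, rfl | rfl⟩ := k.eq_nat_or_neg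
  · exact hn n
  · conv_lhs => rw [← hn n]
    exact aut_zpow_neg_apply α _ v

/-- An `α`-fixed nonzero `v` with `a v = v α^k(a)` for all `a` is a unit, by `α`-simplicity, and
then `α^k` is inner. -/
lemma eq_zero_of_twisted_central
    (hsimple : ∀ T : TwoSidedIdeal A, (∀ a : A, a ∈ T ↔ α a ∈ T) → T = ⊥ ∨ T = ⊤)
    (hinner : ∀ i : ℕ, 1 ≤ i → ¬∃ w : Aˣ, ∀ a : A, (⇑α)^[i] a = ↑w * a * ↑w⁻¹)
    {v : A} {k : ℤ} (hk : k ≠ 0) (hfix : α v = v) (hv : ∀ a, a * v = v * (α ^ k) a) : v = 0 := by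
  let V : TwoSidedIdeal A := .mk' {x | ∃ b, x = v * b} ⟨0, by simp⟩
    (by rintro _ _ ⟨b, rfl⟩ ⟨c, rfl⟩; exact ⟨b + c, (mul_add ..).symm⟩)
    (by rintro _ ⟨b, rfl⟩; exact ⟨-b, (mul_neg ..).symm⟩)
    (by rintro x _ ⟨b, rfl⟩; exact ⟨(α ^ k) x * b, by rw [← mul_assoc, hv, mul_assoc]⟩)
    (by rintro _ y ⟨b, rfl⟩; exact ⟨b * y, mul_assoc ..⟩)
  have hV : ∀ x, x ∈ V ↔ ∃ b, x = v * b := fun x => by rw [TwoSidedIdeal.mem_mk']; rfl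
  rcases hsimple V fun a => by
    rw [hV, hV]
    constructor
    · rintro ⟨b, rfl⟩
      exact ⟨α b, by rw [map_mul, hfix]⟩
    · rintro ⟨b, hb⟩
      refine ⟨α.symm b, α.injective ?_⟩
      rw [hb, map_mul, hfix, RingEquiv.apply_symm_apply] with h | h
  · exact (TwoSidedIdeal.mem_bot A).1 (h ▸ (hV v).2 ⟨1, (mul_one v).symm⟩)
  · obtain ⟨b, hb⟩ := (hV 1).1 (h ▸ trivial)
    have hbv : b * v = 1 := by
      have := congrArg (α ^ k) hb
      rw [map_one, map_mul, zpow_fixed hfix] at this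
      rw [hv, ← this]
    have hconj : ∀ a, (α ^ k) a = b * a * v := fun a => by
      rw [mul_assoc, hv, ← mul_assoc, hbv, one_mul]
    let w : Aˣ := ⟨b, v, hbv, hb.symm⟩
    rcases lt_or_gt_of_ne hk with hk | hk
    · refine absurd ⟨w⁻¹, fun a => ?_⟩ (hinner (-k).toNat (by omega))
      have := hconj ((α ^ (-k)) a)
      rw [aut_zpow_apply_neg] at this
      rw [← aut_zpow_natCast, Int.toNat_of_nonneg (by omega), inv_inv]
      change _ = v * a * b
      generalize (α ^ (-k)) a = x at this ⊢
      rw [this, mul_assoc b, ← mul_assoc v b, ← hb, one_mul, mul_assoc, ← hb, mul_one]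
    · refine absurd ⟨w, fun a => ?_⟩ (hinner k.toNat (by omega))
      rw [← aut_zpow_natCast, Int.toNat_of_nonneg (by omega)]
      exact hconj a

/-- If `A` is `α`-simple and no positive power of `α` is inner then `A[Y^{±1}; α]` is simple, so
every nonzero ideal of `W` contains a power of `Y`. -/
lemma exists_Y_pow_mem (hW : IsGWA α u ι X Y) (hureg : ∀ a : A, a * u = 0 → a = 0)
    (hsimple : ∀ T : TwoSidedIdeal A, (∀ a : A, a ∈ T ↔ α a ∈ T) → T = ⊥ ∨ T = ⊤)
    (hinner : ∀ i : ℕ, 1 ≤ i → ¬∃ w : Aˣ, ∀ a : A, (⇑α)^[i] a = ↑w * a * ↑w⁻¹)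
    (hP : P ≠ ⊥) : ∃ n : ℕ, Y ^ n ∈ P := by
  classical
  -- a nonzero element of the Laurent ideal with the fewest terms
  have hex : ∃ n, ∃ f : ℤ →₀ A, f ≠ 0 ∧ InLaurent α ι X Y P f ∧ f.support.card = n := by
    obtain ⟨f, h1, h2⟩ := exists_inLaurent hW hureg hP
    exact ⟨_, f, h1, h2, rfl⟩
  obtain ⟨f₀, hf₀, hf₀P, hcard⟩ := Nat.find_spec hex
  have hmin : ∀ f : ℤ →₀ A, InLaurent α ι X Y P f → f.support.card < f₀.support.card → f = 0 := by
    intro f hf hlt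
    by_contra hf0
    exact Nat.find_min hex (hcard ▸ hlt) ⟨f, hf0, hf, rfl⟩
  obtain ⟨d₀, hd₀⟩ := Finsupp.support_nonempty_iff.2 hf₀
  have hvanish : ∀ f : ℤ →₀ A, InLaurent α ι X Y P f → (∀ d, f₀ d = 0 → f d = 0) → f d₀ = 0 →
      f = 0 := by
    intro f hf hs h0
    refine hmin f hf (Finset.card_lt_card ⟨fun d hd => ?_, fun hsub => ?_⟩)
    · rw [Finsupp.mem_support_iff] at hd ⊢
      exact fun h => hd (hs d h)
    · exact Finsupp.mem_support_iff.1 (hsub hd₀) h0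
  -- its `d₀`-coefficient can be normalised to `1`
  obtain ⟨f, hfP, hfs, hf1⟩ :
      ∃ f, InLaurent α ι X Y P f ∧ (∀ d, f₀ d = 0 → f d = 0) ∧ f d₀ = 1 := by
    let K : TwoSidedIdeal A := .mk'
      {a | ∃ f, InLaurent α ι X Y P f ∧ (∀ d, f₀ d = 0 → f d = 0) ∧ f d₀ = a}
      ⟨0, InLaurent.zero, fun _ _ => rfl, rfl⟩
      (by
        rintro _ _ ⟨f, h1, h2, rfl⟩ ⟨g, h3, h4, rfl⟩
        exact ⟨f + g, h1.add h3, fun d hd => by simp [h2 d hd, h4 d hd], rfl⟩)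
      (by
        rintro _ ⟨f, h1, h2, rfl⟩
        exact ⟨-f, h1.neg, fun d hd => by simp [h2 d hd], rfl⟩)
      (by
        rintro x _ ⟨f, h1, h2, rfl⟩
        exact ⟨x • f, h1.smul x, fun d hd => by simp [h2 d hd], by simp⟩)
      (by
        rintro _ y ⟨f, h1, h2, rfl⟩
        refine ⟨_, h1.mulRight hW ((α ^ (-d₀)) y), fun d hd => ?_, ?_⟩
        · rw [laurentMulRight_apply, h2 d hd, zero_mul]
        · rw [laurentMulRight_apply, aut_zpow_apply_neg])
    have hK : ∀ a, a ∈ K ↔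
        ∃ f, InLaurent α ι X Y P f ∧ (∀ d, f₀ d = 0 → f d = 0) ∧ f d₀ = a := fun a => by
      rw [TwoSidedIdeal.mem_mk']; rfl
    have hmap : ∀ (k : ℤ) (a : A), a ∈ K → (α ^ k) a ∈ K := by
      intro k a ha
      obtain ⟨f, h1, h2, rfl⟩ := (hK a).1 ha
      exact (hK _).2 ⟨_, h1.mapRange k, fun d hd => by simp [h2 d hd], by simp⟩
    rcases hsimple K fun a => ⟨fun h => by simpa using hmap 1 a h, fun h => by
      simpa [← aut_symm_eq] using hmap (-1) _ h⟩ with h | h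
    · exact absurd ((TwoSidedIdeal.mem_bot A).1 (h ▸ (hK _).2 ⟨f₀, hf₀P, fun _ => id, rfl⟩))
        (Finsupp.mem_support_iff.1 hd₀)
    · exact (hK 1).1 (h ▸ trivial)
  -- the commutators with `A` and with `Y` have fewer terms, so they vanish
  have hcomm : ∀ a d, a * f d = f d * (α ^ (d - d₀)) a := by
    intro a d
    have h := hvanish (a • f - laurentMulRight α ((α ^ (-d₀)) a) f)
      ((hfP.smul a).sub (hfP.mulRight hW _))
      (fun d hd => by simp [laurentMulRight_apply, hfs d hd])
      (by simp [laurentMulRight_apply, hf1])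
    have h := DFunLike.congr_fun h d
    rw [Finsupp.sub_apply, laurentMulRight_apply, ← aut_zpow_add, ← sub_eq_add_neg] at h
    exact sub_eq_zero.1 h
  have hfixed : ∀ d, α (f d) = f d := by
    intro d
    have h := hvanish (Finsupp.mapRange (α ^ (1 : ℤ)) (map_zero _) f - f)
      ((hfP.mapRange 1).sub hfP) (fun d hd => by simp [hfs d hd]) (by simp [hf1])
    have h := DFunLike.congr_fun h d
    rw [Finsupp.sub_apply, Finsupp.mapRange_apply, zpow_one] at h
    exact sub_eq_zero.1 h
  have hf : f = Finsupp.single d₀ 1 := by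
    ext d
    rw [Finsupp.single_apply]
    split_ifs with h
    · rw [← h, hf1]
    · exact eq_zero_of_twisted_central hsimple hinner (sub_ne_zero.2 (Ne.symm h)) (hfixed d)
        fun a => hcomm a d
  obtain ⟨N, hN⟩ := hfP
  have h := hN (|N| + |d₀|) |N| (by have := le_abs_self N; have := abs_nonneg d₀; omega)
    (le_abs_self N)
  have hnn : 0 ≤ d₀ + (|N| + |d₀|) + |N| := by
    have := neg_abs_le d₀
    have := abs_nonneg N
    omega
  rw [hf, laurentSum_single, map_one, map_one, one_mul, gwaMon_of_nonneg _ _ hnn] at h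
  exact ⟨_, h⟩

end Simple

/-- Theorem 3.14: with `u` central and regular, `Au + Aαⁱ(u) = A` for all positive
`i ≠ m`, and `M = Au + Aα^m(u)` maximal, the graded ideal `J(M)` is a maximal two-sided
ideal of `W` containing `X^m` and `Y^m`, and is the unique prime two-sided ideal
containing both `X^r` and `Y^r` for some `r ≥ 1`; if moreover `A` is `α`-simple and no
positive power of `α` is inner, then `J(M)` is the unique nonzero prime two-sided ideal
of `W`. -/
theorem stmt13 {A W : Type*} [Ring A] [Ring W]
    (α : A ≃+* A) (u : A) (ι : A →+* W) (X Y : W) (hW : IsGWA α u ι X Y)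
    (hureg : (∀ a : A, u * a = 0 → a = 0) ∧ (∀ a : A, a * u = 0 → a = 0))
    (m : ℕ) (hm : 1 ≤ m)
    -- (1) `Au + Aαⁱ(u) = A` for all positive integers `i ≠ m`
    (h1 : ∀ i : ℕ, 1 ≤ i → i ≠ m → ∀ a : A, ∃ b c : A, a = b * u + c * (⇑α)^[i] u)
    -- (2) `M := Au + Aα^m(u)` is a maximal two-sided ideal of `A`
    (M : TwoSidedIdeal A)
    (hMcar : (M : Set A) = genSet2 u ((⇑α)^[m] u))
    (hMmax : IsMaximalTwoSided M) :
    -- `J(M)` is a maximal two-sided ideal containing `X^m` and `Y^m`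
    (∃ T : TwoSidedIdeal W,
      (T : Set W) = gwaGradedSet ι X Y (Jcomp α (M : Set A) m) ∧
      IsMaximalTwoSided T ∧ X ^ m ∈ T ∧ Y ^ m ∈ T) ∧
    -- `J(M)` is the unique prime containing `X^r` and `Y^r` for some `r ≥ 1`
    (∀ P : TwoSidedIdeal W, IsPrimeTwoSided P →
      (∃ r : ℕ, 1 ≤ r ∧ X ^ r ∈ P ∧ Y ^ r ∈ P) →
      (P : Set W) = gwaGradedSet ι X Y (Jcomp α (M : Set A) m)) ∧
    -- if `A` is `α`-simple and no positive power of `α` is inner,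
    -- `J(M)` is the unique nonzero prime
    ((∀ T : TwoSidedIdeal A, (∀ a : A, a ∈ T ↔ α a ∈ T) → T = ⊥ ∨ T = ⊤) →
      (∀ i : ℕ, 1 ≤ i → ¬∃ w : Aˣ, ∀ a : A, (⇑α)^[i] a = ↑w * a * ↑w⁻¹) →
      ∀ P : TwoSidedIdeal W, IsPrimeTwoSided P → P ≠ ⊥ →
        (P : Set W) = gwaGradedSet ι X Y (Jcomp α (M : Set A) m)) := by
  have hum_eq : (⇑α)^[m] u = (α ^ (m : ℤ)) u := (aut_zpow_natCast α m u).symm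
  have hMmem : ∀ a, a ∈ M ↔ ∃ b c : A, a = b * u + c * (α ^ (m : ℤ)) u := fun a => by
    rw [← SetLike.mem_coe, hMcar, hum_eq]; rfl
  have hu0 : u ∈ M := (hMmem u).2 ⟨1, 0, by simp⟩
  have hum : (α ^ (m : ℤ)) u ∈ M := (hMmem _).2 ⟨0, 1, by simp⟩
  -- translating the comaximality hypothesis by `α^i`
  have hlt : ∀ i j : ℤ, i < j → j - i ≠ m →
      ∃ b c : A, 1 = b * (α ^ i) u + c * (α ^ j) u := by
    intro i j hij hne
    obtain ⟨b, c, h⟩ := h1 (j - i).toNat (by omega) (by omega) 1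
    refine ⟨(α ^ i) b, (α ^ i) c, ?_⟩
    have h := congrArg (α ^ i) h
    rw [← aut_zpow_natCast, Int.toNat_of_nonneg (by omega), map_one, map_add, map_mul, map_mul,
      ← aut_zpow_add, add_sub_cancel] at h
    exact h
  have hco : ∀ i j : ℤ, i ≠ j → i - j ≠ m → j - i ≠ m →
      ∃ b c : A, 1 = b * (α ^ i) u + c * (α ^ j) u := by
    intro i j hij h2 h3
    rcases lt_or_gt_of_ne hij with h | h
    · exact hlt i j h h3
    · obtain ⟨b, c, hbc⟩ := hlt j i h h2
      exact ⟨c, b, by rw [hbc, add_comm]⟩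
  have hgood : ∀ k : ℤ, k ≠ 0 → -m < k → k < m → ∀ a, a * (α ^ k) u ∈ M → a ∈ M := by
    intro k hk hk1 hk2 a ha
    obtain ⟨b, c, hbc⟩ := hco 0 k hk.symm (by omega) (by omega)
    have h : a = a * b * u + a * (α ^ k) u * c := by
      rw [mul_assoc a ((α ^ k) u), aut_zpow_central α hW.central, mul_assoc, ← mul_add]
      simpa using congrArg (a * ·) hbc
    rw [h]
    exact M.add_mem (M.mul_mem_left _ _ hu0) (M.mul_mem_right _ _ ha)
  obtain ⟨T, hT⟩ := exists_gradedIdeal hW hu0 hum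
  have hTcar : (T : Set W) = gwaGradedSet ι X Y (Jcomp α (M : Set A) m) := by
    ext w
    rw [SetLike.mem_coe, hT, mem_gwaGradedSet_iff]
  have hThom : ∀ d, ∀ a ∈ JIdeal α M m d, ι a * gwaMon X Y d ∈ T := by
    classical
    intro d a ha
    refine (hT _).2 ⟨Finsupp.single d a, fun e => ?_, gwaSum_single ..⟩
    rw [Finsupp.single_apply]
    split_ifs with h
    · exact h ▸ ha
    · exact (JIdeal α M m e).zero_mem
  have hTtop : T ≠ ⊤ := by
    intro h
    obtain ⟨f, hf, hf1⟩ := (hT 1).1 (h ▸ trivial)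
    have : f = Finsupp.single 0 1 := hW.bijective.1 (by
      rw [hf1, gwaSum_single, gwaMon_zero, map_one, one_mul])
    have h0 := mem_JIdeal.1 (hf 0) 0 le_rfl (by omega) (by omega) (by omega)
    rw [this, Finsupp.single_eq_same, map_one] at h0
    exact hMmax.1 (M.one_mem_iff.1 h0)
  have hTmax : ∀ T' : TwoSidedIdeal W, T < T' → T' = ⊤ := by
    intro T' hlt'
    obtain ⟨hle, w, hw, hwT⟩ := SetLike.lt_iff_le_and_exists.1 hlt'
    obtain ⟨f, rfl⟩ := hW.bijective.2 w
    have : ∃ d, f d ∉ JIdeal α M m d := by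
      by_contra! h
      exact hwT ((hT _).2 ⟨f, h, rfl⟩)
    obtain ⟨d, hd⟩ := this
    exact isMaximal_gradedIdeal hW hu0 hgood hMmax T' (fun d a ha => hle (hThom d a ha)) f hw d hd
  have hpow : ∀ P : TwoSidedIdeal W, P ≠ ⊤ → (∃ r : ℕ, X ^ r ∈ P) → (∃ r : ℕ, Y ^ r ∈ P) →
      (P : Set W) = gwaGradedSet ι X Y (Jcomp α (M : Set A) m) := by
    intro P hP hX hY
    have hYm : Y ^ m ∈ P := Y_pow_mem hW (fun i hi him => by
      simpa using hco 0 i (by omega) (by omega) (by omega)) P hP hY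
    have hXm : X ^ m ∈ P := Y_pow_mem hW.swap (fun i hi him => by
      obtain ⟨b, c, h⟩ := hco 1 (-i + 1) (by omega) (by omega) (by omega)
      exact ⟨b, c, by rw [h, aut_zpow_symm, ← aut_zpow_add_one, zpow_one]⟩) P hP hX
    have hle : T ≤ P := by
      intro w hw
      obtain ⟨f, hf, rfl⟩ := (hT w).1 hw
      rw [gwaSum_apply]
      exact sum_mem fun d _ =>
        gradedIdeal_le hW (fun a ha => (hMmem a).1 ha) hco P hXm hYm d _ (hf d)
    rw [← hTcar]
    by_contra hne
    exact hP (hTmax P (lt_of_le_of_ne hle fun h => hne (h ▸ rfl)))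
  have htriv : ∀ (d : ℤ), m ≤ d.natAbs → gwaMon X Y d ∈ T := by
    intro d hd
    have := hThom d 1 (mem_JIdeal.2 fun _ _ _ _ _ => by omega)
    rwa [map_one, one_mul] at this
  refine ⟨⟨T, hTcar, ⟨hTtop, hTmax⟩, ?_, ?_⟩, ?_, ?_⟩
  · rw [← gwaMon_neg_natCast X Y]
    exact htriv _ (by omega)
  · rw [← gwaMon_natCast X Y]
    exact htriv _ (by omega)
  · rintro P hP ⟨r, -, hX, hY⟩
    exact hpow P hP.1 ⟨r, hX⟩ ⟨r, hY⟩
  · intro hsimple hinner P hP hbot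
    refine hpow P hP.1 ?_ (exists_Y_pow_mem hW hureg.2 hsimple hinner hbot)
    refine exists_Y_pow_mem hW.swap (fun a ha => ?_) (fun S hS => hsimple S fun a => ?_)
      (fun i hi => ?_) hbot
    · have := congrArg α.symm ha
      rw [map_mul, RingEquiv.symm_apply_apply, map_zero] at this
      exact (map_eq_zero_iff _ α.symm.injective).1 (hureg.2 _ this)
    · simpa using (hS (α a)).symm
    · rintro ⟨w, hw⟩
      refine hinner i hi ⟨w⁻¹, fun a => ?_⟩
      have h := hw ((⇑α)^[i] a)
      rw [aut_iterate_symm, ← aut_zpow_natCast, aut_zpow_neg_apply] at h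
      rw [← aut_zpow_natCast]
      generalize (α ^ (i : ℤ)) a = x at h ⊢
      rw [h]
      simp [mul_assoc]
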